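/- Let N ≥ 1, let D be an N×N real diagonal matrix with nonnegative diagonal entries, let R be an N×N real matrix with nonnegative entries, and let π ∈ ℝ^N be a row vector all of whose entries are strictly positive. If there exists a row vector v ∈ ℝ^N with nonnegative entries satisfying v·D = π + v·R, then the matrix D − R is invertible, the solution v is unique, and v = π·(D − R)^{-1}. -/

import Mathlib

open Matrix

/-!
Multiplying row `i` of `D - R` by `v i` yields a matrix whose column sums are the entries of `π`.
Its off-diagonal entries are nonpositive, so positive column sums mean strict column diagonal
dominance, and the Levy–Desplanques theorem gives a nonzero determinant.
-/

section WeightedDominance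

variable {n : Type*} [Fintype n] [DecidableEq n]

theorem det_ne_zero_of_weighted_sum_col_lt_diag {K : Type*} [NormedField K] {A : Matrix n n K}
    (w : n → K) (h : ∀ j, ∑ i ∈ Finset.univ.erase j, ‖w i * A i j‖ < ‖w j * A j j‖) :
    A.det ≠ 0 := by
  have hscaled : (diagonal w * A).det ≠ 0 :=
    det_ne_zero_of_sum_col_lt_diag (by simpa only [diagonal_mul] using h)
  rw [det_mul] at hscaled
  exact right_ne_zero_of_mul hscaled

theorem isUnit_of_offDiag_nonpos_of_vecMul_pos {A : Matrix n n ℝ}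
    (hA : Pairwise fun i j ↦ A i j ≤ 0) {v : n → ℝ} (hv : ∀ i, 0 ≤ v i)
    (hvA : ∀ j, 0 < (v ᵥ* A) j) : IsUnit A := by
  rw [isUnit_iff_isUnit_det, isUnit_iff_ne_zero]
  refine det_ne_zero_of_weighted_sum_col_lt_diag v fun j ↦ ?_
  have hcol : (v ᵥ* A) j = v j * A j j + ∑ i ∈ Finset.univ.erase j, v i * A i j :=
    (Finset.add_sum_erase _ _ (Finset.mem_univ j)).symm
  calc ∑ i ∈ Finset.univ.erase j, ‖v i * A i j‖
      = ∑ i ∈ Finset.univ.erase j, -(v i * A i j) :=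
        Finset.sum_congr rfl fun i hi ↦ Real.norm_of_nonpos <|
          mul_nonpos_of_nonneg_of_nonpos (hv i) (hA (Finset.ne_of_mem_erase hi))
    _ = v j * A j j - (v ᵥ* A) j := by rw [hcol, Finset.sum_neg_distrib]; ring
    _ < v j * A j j := sub_lt_self _ (hvA j)
    _ ≤ ‖v j * A j j‖ := Real.le_norm_self _

end WeightedDominance

theorem eq_vecMul_inv_of_vecMul_eq {n α : Type*} [Fintype n] [DecidableEq n] [CommRing α]
    {A : Matrix n n α} (hA : IsUnit A) {v b : n → α} (h : v ᵥ* A = b) : v = b ᵥ* A⁻¹ := by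
  rw [← h, vecMul_vecMul, mul_nonsing_inv _ ((isUnit_iff_isUnit_det A).mp hA), vecMul_one]

theorem vecMul_eq_add_vecMul_iff {m n α : Type*} [Fintype m] [NonUnitalNonAssocRing α]
    {D R : Matrix m n α} {v : m → α} {b : n → α} :
    v ᵥ* D = b + v ᵥ* R ↔ v ᵥ* (D - R) = b := by
  rw [vecMul_sub, sub_eq_iff_eq_add]

theorem stmt_1_general {n : Type*} [Fintype n] [DecidableEq n] {D R : Matrix n n ℝ}
    (hDR : Pairwise fun i j ↦ D i j ≤ R i j) {π : n → ℝ} (hπ : ∀ i, 0 < π i)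
    {v : n → ℝ} (hv : ∀ i, 0 ≤ v i) (heq : v ᵥ* D = π + v ᵥ* R) :
    IsUnit (D - R) ∧
      (∀ w : n → ℝ, w ᵥ* D = π + w ᵥ* R → w = v) ∧
      v = π ᵥ* (D - R)⁻¹ := by
  have hunit : IsUnit (D - R) :=
    isUnit_of_offDiag_nonpos_of_vecMul_pos (fun _ _ hij ↦ sub_nonpos.mpr (hDR hij)) hv
      (by rwa [vecMul_eq_add_vecMul_iff.mp heq])
  have hsol (w : n → ℝ) (hw : w ᵥ* D = π + w ᵥ* R) : w = π ᵥ* (D - R)⁻¹ :=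
    eq_vecMul_inv_of_vecMul_eq hunit (vecMul_eq_add_vecMul_iff.mp hw)
  exact ⟨hunit, fun w hw ↦ (hsol w hw).trans (hsol v heq).symm, hsol v heq⟩

/-- Under the same hypotheses as the stability lemma, the matrix
`D - R` is invertible, the solution `v` of `v·D = π + v·R` is unique, and
`v = π·(D - R)⁻¹`. -/
theorem stmt_1 (N : ℕ) (hN : 1 ≤ N)
    (D R : Matrix (Fin N) (Fin N) ℝ)
    (hDdiag : D.IsDiag) (hDnonneg : ∀ i, 0 ≤ D i i)
    (hR : ∀ i j, 0 ≤ R i j)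
    (π : Fin N → ℝ) (hπ : ∀ i, 0 < π i)
    (v : Fin N → ℝ) (hv : ∀ i, 0 ≤ v i)
    (heq : v ᵥ* D = π + v ᵥ* R) :
    IsUnit (D - R) ∧
      (∀ w : Fin N → ℝ, w ᵥ* D = π + w ᵥ* R → w = v) ∧
      v = π ᵥ* (D - R)⁻¹ :=
  stmt_1_general (fun i j hij ↦ (hDdiag hij).trans_le (hR i j)) hπ hv heq
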